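/- Let b, ρ ∈ ℂ with Re(ρ) > 0 and let z > 0 be real. Then: (i) for c, ν ∈ ℂ with Re(c) > 1/2 and Re(ν) > -3/2, the generalized four parameter spherical Bessel function satisfies g_ν^{(b,c)}(z;ρ) = (√π (z/2)^ν)/(2 Γ(ν+3/2)² Γ(c-1/2)) · ∫_0^∞ t^{c+ν-1} e^{-t-ρ/t} ₀F₃(-; (2ν+3)/2, (2ν+3)/4, (2ν+5)/4; -b z² t²/16) dt; and (ii) for λ, ν ∈ ℂ with Re(λ) > 0 and Re(ν) > -1, the generalized four parameter Bessel-Clifford function satisfies C_ν^{(b,λ)}(z;ρ) = (1/(Γ(ν+1)² Γ(λ))) · ∫_0^∞ t^{λ+ν-1} e^{-t-ρ/t} ₀F₃(-; ν+1, (ν+1)/2, (ν+2)/2; -b z t²/4) dt, both integrals being over real t ∈ (0,∞). -/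

import Mathlib

open Complex MeasureTheory Real Set

/-- Extended Gamma function `Γ_ρ(x) = ∫_0^∞ t^(x-1) e^(-t-ρ/t) dt`. -/
noncomputable def extGamma (ρ x : ℂ) : ℂ :=
  ∫ t in Ioi (0:ℝ), (t:ℂ) ^ (x - 1) * Complex.exp (-(t:ℂ) - ρ / (t:ℂ))

/-- Generalized Pochhammer symbol `(c;ρ)_μ = Γ_ρ(c+μ)/Γ(c)`. -/
noncomputable def genPoch (c ρ μ : ℂ) : ℂ := extGamma ρ (c + μ) / Complex.Gamma c

/-- Unified four parameter Bessel function `G_ν^{(b,c)}(z;ρ)` with complex order,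
powers being principal complex powers. -/
noncomputable def unifiedG (b c ν ρ z : ℂ) : ℂ :=
  ∑' k : ℕ, (-b) ^ k * genPoch c ρ (2 * (k:ℂ) + ν) * (z / 2) ^ (2 * (k:ℂ) + ν) /
    ((k.factorial : ℂ) * Complex.Gamma (ν + (k:ℂ) + 1) * Complex.Gamma (ν + 2 * (k:ℂ) + 1))

/-- Unified four parameter Bessel function with integer order, powers being integer powers. -/
noncomputable def unifiedGInt (b c ρ : ℂ) (ν : ℤ) (z : ℂ) : ℂ :=
  ∑' k : ℕ, (-b) ^ k * genPoch c ρ (2 * (k:ℂ) + (ν:ℂ)) * (z / 2) ^ (2 * (k:ℤ) + ν) /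
    ((k.factorial : ℂ) * Complex.Gamma ((ν:ℂ) + (k:ℂ) + 1) * Complex.Gamma ((ν:ℂ) + 2 * (k:ℂ) + 1))

/-- Pochhammer symbol `(a)_k = Γ(a+k)/Γ(a)`. -/
noncomputable def poch (a : ℂ) (k : ℕ) : ℂ := Complex.Gamma (a + (k:ℂ)) / Complex.Gamma a

/-- Generalized hypergeometric function `₀F₃`. -/
noncomputable def hyp0F3 (a₁ a₂ a₃ w : ℂ) : ℂ :=
  ∑' k : ℕ, w ^ k / (poch a₁ k * poch a₂ k * poch a₃ k * (k.factorial : ℂ))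

/-- Generalized hypergeometric function `₂F₃`. -/
noncomputable def hyp2F3 (a₁ a₂ b₁ b₂ b₃ w : ℂ) : ℂ :=
  ∑' k : ℕ, poch a₁ k * poch a₂ k * w ^ k /
    (poch b₁ k * poch b₂ k * poch b₃ k * (k.factorial : ℂ))

/-- Bessel function of the first kind `J_μ(z)` for real `z > 0`. -/
noncomputable def besselJ (μ : ℂ) (z : ℝ) : ℂ :=
  ∑' k : ℕ, (-1) ^ k * ((z:ℂ) / 2) ^ (2 * (k:ℂ) + μ) /
    ((k.factorial : ℂ) * Complex.Gamma (μ + (k:ℂ) + 1))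

/-- Generalized four parameter spherical Bessel function
`g_ν^{(b,c)}(z;ρ) = √(π/(2z)) · G_{ν+1/2}^{(b,c-1/2)}(z;ρ)`. -/
noncomputable def sphG (b c ν ρ : ℂ) (z : ℝ) : ℂ :=
  (Real.sqrt (π / (2 * z)) : ℂ) * unifiedG b (c - 1/2) (ν + 1/2) ρ (z:ℂ)

/-- Generalized four parameter Bessel-Clifford function
`C_ν^{(b,λ)}(z;ρ) = z^{-ν/2} · G_ν^{(b,λ)}(2√z;ρ)` for real `z > 0`. -/
noncomputable def cliffC (b lam ν ρ : ℂ) (z : ℝ) : ℂ :=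
  (z:ℂ) ^ (-ν / 2) * unifiedG b lam ν ρ ((2 * Real.sqrt z : ℝ) : ℂ)

/-!
Expand `₀F₃` in its power series and integrate it against `t ^ (x - 1) * exp (-t - ρ / t)` term by
term. The `k`-th term contributes `Γ_ρ(x + 2k)`, an integral that converges for every exponent since
`exp (-ρ / t)` is smaller than any power of `t` near the origin. Its absolute version is at most
`Γ(Re x + 2k)` for large `k`, hence of order `4 ^ k * (k !) ^ 2` up to a power of `k`, whereas the
coefficients of `₀F₃` decay like `(k !) ^ (-4)`: this justifies the interchange. The resulting
series is the one defining `G_ν`, because Legendre's duplication formula turns `(ν + 1)_{2k}` into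
`4 ^ k * ((ν + 1) / 2)_k * ((ν + 2) / 2)_k`.
-/

/-- The integrand `t ^ (x - 1) * exp (-t - ρ / t)` of the extended Gamma function `extGamma ρ x`,
meaningful for `0 < t`. -/
noncomputable def extGammaIntegrand (ρ x : ℂ) (t : ℝ) : ℂ :=
  (t : ℂ) ^ (x - 1) * Complex.exp (-(t : ℂ) - ρ / (t : ℂ))

/-- The `k`-th coefficient `1 / ((a₁)_k (a₂)_k (a₃)_k k!)` of the power series `₀F₃`. -/
noncomputable def hyp0F3Coeff (a₁ a₂ a₃ : ℂ) (k : ℕ) : ℂ :=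
  (poch a₁ k * poch a₂ k * poch a₃ k * (k.factorial : ℂ))⁻¹

section ExtendedGamma

theorem exp_neg_div_le_mul_pow {r t : ℝ} (hr : 0 < r) (ht : 0 < t) (n : ℕ) :
    Real.exp (-(r / t)) ≤ n.factorial / r ^ n * t ^ n := by
  have hpow : 0 < (r / t) ^ n / (n.factorial : ℝ) := by positivity
  calc Real.exp (-(r / t)) = (Real.exp (r / t))⁻¹ := Real.exp_neg _
    _ ≤ ((r / t) ^ n / n.factorial)⁻¹ :=
      inv_anti₀ hpow (Real.pow_div_factorial_le_exp _ (by positivity) n)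
    _ = n.factorial / r ^ n * t ^ n := by
      rw [div_pow]
      field_simp

theorem continuousOn_extGammaIntegrand (ρ x : ℂ) :
    ContinuousOn (extGammaIntegrand ρ x) (Ioi 0) := by
  refine fun t ht ↦ ContinuousAt.continuousWithinAt ?_
  have ht₀ : (t : ℂ) ≠ 0 := ofReal_ne_zero.2 (ne_of_gt ht)
  exact (continuousAt_ofReal_cpow_const _ _ (Or.inr (ne_of_gt ht))).mul
    (continuous_ofReal.continuousAt.neg.sub
      (continuousAt_const.div continuous_ofReal.continuousAt ht₀)).cexp

theorem norm_extGammaIntegrand (ρ x : ℂ) {t : ℝ} (ht : 0 < t) :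
    ‖extGammaIntegrand ρ x t‖ =
      Real.exp (-t) * t ^ (x.re - 1) * Real.exp (-(ρ.re / t)) := by
  have hre : (-(t : ℂ) - ρ / (t : ℂ)).re = -t + -(ρ.re / t) := by
    simp [div_ofReal_re, sub_eq_add_neg]
  rw [extGammaIntegrand, norm_mul, norm_cpow_eq_rpow_re_of_pos ht, Complex.norm_exp, hre,
    Real.exp_add, sub_re, one_re]
  ring

theorem extGammaIntegrand_add_natCast (ρ x : ℂ) (n : ℕ) {t : ℝ} (ht : 0 < t) :
    extGammaIntegrand ρ (x + n) t = (t : ℂ) ^ n * extGammaIntegrand ρ x t := by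
  have ht₀ : (t : ℂ) ≠ 0 := ofReal_ne_zero.2 ht.ne'
  rw [extGammaIntegrand, extGammaIntegrand, add_sub_right_comm, cpow_add _ _ ht₀, cpow_natCast]
  ring

variable {ρ : ℂ} (hρ : 0 < ρ.re)
include hρ

theorem integrableOn_extGammaIntegrand (x : ℂ) :
    IntegrableOn (extGammaIntegrand ρ x) (Ioi 0) := by
  obtain ⟨n, hn⟩ := exists_nat_gt (-x.re)
  have hmajorant := (Real.GammaIntegral_convergent (s := x.re + n) (by linarith)).const_mul
    ((n.factorial : ℝ) / ρ.re ^ n)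
  refine hmajorant.mono'
    ((continuousOn_extGammaIntegrand ρ x).aestronglyMeasurable measurableSet_Ioi) ?_
  refine ae_restrict_of_forall_mem measurableSet_Ioi fun t (ht : 0 < t) ↦ ?_
  calc ‖extGammaIntegrand ρ x t‖
      = Real.exp (-t) * t ^ (x.re - 1) * Real.exp (-(ρ.re / t)) := norm_extGammaIntegrand ρ x ht
    _ ≤ Real.exp (-t) * t ^ (x.re - 1) * (n.factorial / ρ.re ^ n * t ^ n) := by
      gcongr
      exact exp_neg_div_le_mul_pow hρ ht n
    _ = n.factorial / ρ.re ^ n * (Real.exp (-t) * t ^ (x.re + n - 1)) := by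
      rw [add_sub_right_comm, Real.rpow_add ht, Real.rpow_natCast]
      ring

theorem norm_extGammaIntegrand_le (x : ℂ) {t : ℝ} (ht : 0 < t) :
    ‖extGammaIntegrand ρ x t‖ ≤ Real.exp (-t) * t ^ (x.re - 1) := by
  rw [norm_extGammaIntegrand ρ x ht]
  refine mul_le_of_le_one_right (by positivity) (Real.exp_le_one_iff.2 ?_)
  exact neg_nonpos.2 (by positivity)

theorem integral_norm_extGammaIntegrand_le_Gamma {x : ℂ} (hx : 0 < x.re) :
    ∫ t in Ioi (0 : ℝ), ‖extGammaIntegrand ρ x t‖ ≤ Real.Gamma x.re := by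
  rw [Real.Gamma_eq_integral hx]
  exact setIntegral_mono_on (integrableOn_extGammaIntegrand hρ x).norm
    (Real.GammaIntegral_convergent hx) measurableSet_Ioi
    fun t ht ↦ norm_extGammaIntegrand_le hρ x ht

theorem integral_tsum_mul_extGammaIntegrand {ι : Type*} [Countable ι] {a s : ι → ℂ}
    (hs : ∀ᶠ i in Filter.cofinite, 0 < (s i).re)
    (ha : Summable fun i ↦ ‖a i‖ * Real.Gamma (s i).re) :
    ∫ t in Ioi (0 : ℝ), ∑' i, a i * extGammaIntegrand ρ (s i) t =
      ∑' i, a i * extGamma ρ (s i) := by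
  have hint (i : ι) := (integrableOn_extGammaIntegrand hρ (s i)).const_mul (a i)
  have hnorm : Summable fun i ↦ ∫ t in Ioi (0 : ℝ), ‖a i * extGammaIntegrand ρ (s i) t‖ := by
    refine ha.of_norm_bounded_eventually (hs.mono fun i hi ↦ ?_)
    rw [Real.norm_of_nonneg (integral_nonneg fun _ ↦ norm_nonneg _)]
    simp only [norm_mul, integral_const_mul]
    gcongr
    exact integral_norm_extGammaIntegrand_le_Gamma hρ hi
  rw [← integral_tsum_of_summable_integral_norm hint hnorm]
  simp only [integral_const_mul, extGamma, extGammaIntegrand]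

end ExtendedGamma

section Pochhammer

theorem poch_succ (a : ℂ) (k : ℕ) : poch a (k + 1) = (a + k) * poch a k := by
  by_cases h : a + k = 0
  · -- Here `a` is a pole of `Γ`, so `poch a` vanishes through division by zero.
    simp [poch, eq_neg_of_add_eq_zero_left h, Complex.Gamma_neg_nat_eq_zero]
  · rw [poch, poch, ← mul_div_assoc, ← Complex.Gamma_add_one _ h, Nat.cast_succ, add_assoc]

theorem Gamma_mul_poch {a : ℂ} (ha : ∀ n : ℕ, a ≠ -n) (k : ℕ) :
    Complex.Gamma a * poch a k = Complex.Gamma (a + k) :=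
  mul_div_cancel₀ _ (Complex.Gamma_ne_zero ha)

theorem poch_two_mul (a : ℂ) (k : ℕ) :
    poch a (2 * k) = 4 ^ k * (poch (a / 2) k * poch ((a + 1) / 2) k) := by
  have hnum : Complex.Gamma (a / 2 + k) * Complex.Gamma ((a + 1) / 2 + k) * 4 ^ k =
      Complex.Gamma (a + (2 * k : ℕ)) * (2 ^ (1 - a) * √π) := by
    have h := Complex.Gamma_mul_Gamma_add_half (a / 2 + k)
    have hpow : (2 : ℂ) ^ (1 - a - (2 * k : ℕ)) * 4 ^ k = 2 ^ (1 - a) := by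
      rw [cpow_sub _ _ two_ne_zero, cpow_natCast, pow_mul]
      norm_num
    rw [← hpow, show (a + 1) / 2 + k = a / 2 + k + 1 / 2 by ring, h]
    push_cast
    ring_nf
  have hden : Complex.Gamma (a / 2) * Complex.Gamma ((a + 1) / 2) =
      Complex.Gamma a * (2 ^ (1 - a) * √π) := by
    rw [add_div, Complex.Gamma_mul_Gamma_add_half, mul_div_cancel₀ a two_ne_zero, mul_assoc]
  have hconst : (2 : ℂ) ^ (1 - a) * √π ≠ 0 :=
    mul_ne_zero (by simp [cpow_eq_zero_iff]) (ofReal_ne_zero.2 (by positivity))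
  rw [poch, poch, poch, div_mul_div_comm, hden, mul_div, mul_comm (4 ^ k), hnum,
    mul_div_mul_right _ _ hconst]

end Pochhammer

section Hypergeometric

open Filter Topology

theorem summable_of_tendsto_ratio_lt_one {E : Type*} [SeminormedAddCommGroup E] [CompleteSpace E]
    {u : ℕ → E} {r : ℕ → ℝ} {l : ℝ} (hl : l < 1) (hr : Tendsto r atTop (𝓝 l))
    (hu : ∀ᶠ k in atTop, ‖u (k + 1)‖ ≤ r k * ‖u k‖) : Summable u := by
  obtain ⟨q, hlq, hq⟩ := exists_between hl
  refine summable_of_ratio_norm_eventually_le hq ?_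
  filter_upwards [hu, hr.eventually_le_const hlq] with k hk hrk
  exact hk.trans (by gcongr)

variable (a₁ a₂ a₃ : ℂ)

theorem hyp0F3Coeff_succ (k : ℕ) :
    hyp0F3Coeff a₁ a₂ a₃ (k + 1) =
      hyp0F3Coeff a₁ a₂ a₃ k / ((a₁ + k) * (a₂ + k) * (a₃ + k) * (1 + k)) := by
  rw [hyp0F3Coeff, hyp0F3Coeff, poch_succ, poch_succ, poch_succ, Nat.factorial_succ, div_eq_mul_inv,
    ← mul_inv]
  push_cast
  ring

theorem hyp0F3_eq_tsum (w : ℂ) : hyp0F3 a₁ a₂ a₃ w = ∑' k, hyp0F3Coeff a₁ a₂ a₃ k * w ^ k :=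
  tsum_congr fun _ ↦ div_eq_inv_mul _ _

theorem tendsto_ratio_hyp0F3Coeff_mul_Gamma (w σ : ℂ) :
    Tendsto (fun k : ℕ ↦ (σ + 2 * k) * (σ + 1 + 2 * k) * w /
      ((a₁ + k) * (a₂ + k) * (a₃ + k) * (1 + k))) atTop (𝓝 0) := by
  have h₁ := tendsto_add_mul_div_add_mul_atTop_nhds σ a₁ 2 (one_ne_zero (α := ℂ))
  have h₂ := tendsto_add_mul_div_add_mul_atTop_nhds (σ + 1) a₂ 2 (one_ne_zero (α := ℂ))
  have h₃ := tendsto_add_mul_div_add_mul_atTop_nhds w a₃ 0 (one_ne_zero (α := ℂ))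
  have h₄ := tendsto_add_mul_div_add_mul_atTop_nhds 1 1 0 (one_ne_zero (α := ℂ))
  convert ((h₁.mul h₂).mul h₃).mul h₄ using 2 with k
  · simp only [one_mul, zero_mul, add_zero, div_mul_div_comm, mul_one]
  · simp

theorem eventually_pos_add_two_mul (σ : ℝ) : ∀ᶠ k : ℕ in atTop, 0 < σ + 2 * k :=
  (tendsto_atTop_add_const_left _ σ
    (tendsto_natCast_atTop_atTop.const_mul_atTop two_pos)).eventually_gt_atTop 0

theorem summable_hyp0F3Coeff_mul_Gamma (w : ℂ) (σ : ℝ) :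
    Summable fun k : ℕ ↦ ‖hyp0F3Coeff a₁ a₂ a₃ k * w ^ k‖ * Real.Gamma (σ + 2 * k) := by
  have hratio := (tendsto_ratio_hyp0F3Coeff_mul_Gamma a₁ a₂ a₃ w σ).norm
  rw [norm_zero] at hratio
  refine summable_of_tendsto_ratio_lt_one zero_lt_one hratio ?_
  filter_upwards [eventually_pos_add_two_mul σ] with k hk
  have hΓ : Real.Gamma (σ + 2 * (k + 1 : ℕ)) =
      (σ + 2 * k) * (σ + 1 + 2 * k) * Real.Gamma (σ + 2 * k) := by
    rw [show σ + 2 * ((k + 1 : ℕ) : ℝ) = σ + 2 * k + 1 + 1 by push_cast; ring,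
      Real.Gamma_add_one (by positivity), Real.Gamma_add_one hk.ne']
    ring
  have hnorm : ‖(σ + 2 * k : ℂ) * (σ + 1 + 2 * k)‖ = ‖(σ + 2 * k) * (σ + 1 + 2 * k)‖ := by
    rw [← Complex.norm_real]
    push_cast
    rfl
  refine le_of_eq ?_
  rw [hΓ, hyp0F3Coeff_succ, pow_succ, mul_div_assoc, norm_mul (_ * _ : ℂ), hnorm]
  simp only [norm_mul, norm_div, norm_norm]
  ring

theorem integral_extGammaIntegrand_mul_hyp0F3 {ρ : ℂ} (hρ : 0 < ρ.re) (x w : ℂ) :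
    ∫ t in Ioi (0 : ℝ), extGammaIntegrand ρ x t * hyp0F3 a₁ a₂ a₃ (w * (t : ℂ) ^ 2) =
      ∑' k : ℕ, hyp0F3Coeff a₁ a₂ a₃ k * w ^ k * extGamma ρ (x + 2 * k) := by
  have hre (k : ℕ) : (x + 2 * k).re = x.re + 2 * k := by simp
  have hpos : ∀ᶠ k : ℕ in cofinite, 0 < (x + 2 * k).re := by
    simpa only [hre, Nat.cofinite_eq_atTop] using eventually_pos_add_two_mul x.re
  rw [← integral_tsum_mul_extGammaIntegrand hρ hpos
    (by simpa only [hre] using summable_hyp0F3Coeff_mul_Gamma a₁ a₂ a₃ w x.re)]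
  refine setIntegral_congr_fun measurableSet_Ioi fun t ht ↦ ?_
  rw [hyp0F3_eq_tsum, ← tsum_mul_left]
  refine tsum_congr fun k ↦ ?_
  have hshift := extGammaIntegrand_add_natCast ρ x (2 * k) ht
  push_cast at hshift
  rw [hshift, mul_pow, ← pow_mul]
  ring

end Hypergeometric

section Bessel

theorem inv_factorial_mul_Gamma_mul_Gamma {ν : ℂ} (hν : ∀ n : ℕ, ν + 1 ≠ -n) (k : ℕ) :
    ((k.factorial : ℂ) * Complex.Gamma (ν + k + 1) * Complex.Gamma (ν + 2 * k + 1))⁻¹ =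
      hyp0F3Coeff (ν + 1) ((ν + 1) / 2) ((ν + 2) / 2) k / (4 ^ k * Complex.Gamma (ν + 1) ^ 2) := by
  have h₁ : Complex.Gamma (ν + k + 1) = Complex.Gamma (ν + 1) * poch (ν + 1) k := by
    rw [Gamma_mul_poch hν, add_right_comm]
  have h₂ : Complex.Gamma (ν + 2 * k + 1) = Complex.Gamma (ν + 1) *
      (4 ^ k * (poch ((ν + 1) / 2) k * poch ((ν + 2) / 2) k)) := by
    rw [show ν + 2 = ν + 1 + 1 by ring, ← poch_two_mul, Gamma_mul_poch hν, add_right_comm,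
      Nat.cast_mul, Nat.cast_ofNat]
  rw [h₁, h₂, hyp0F3Coeff, div_eq_mul_inv _ (4 ^ k * _), ← mul_inv]
  ring

theorem unifiedG_eq_integral {ρ ν : ℂ} (hρ : 0 < ρ.re) (hν : ∀ n : ℕ, ν + 1 ≠ -n) (b c : ℂ)
    {y : ℂ} (hy : y ≠ 0) :
    unifiedG b c ν ρ y = (y / 2) ^ ν / (Complex.Gamma (ν + 1) ^ 2 * Complex.Gamma c) *
      ∫ t in Ioi (0 : ℝ), extGammaIntegrand ρ (c + ν) t *
        hyp0F3 (ν + 1) ((ν + 1) / 2) ((ν + 2) / 2) (-b * (y / 2) ^ 2 / 4 * (t : ℂ) ^ 2) := by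
  rw [integral_extGammaIntegrand_mul_hyp0F3 _ _ _ hρ, unifiedG, ← tsum_mul_left]
  refine tsum_congr fun k ↦ ?_
  have hpow : (y / 2) ^ (2 * (k : ℂ) + ν) = ((y / 2) ^ 2) ^ k * (y / 2) ^ ν := by
    rw [cpow_add _ _ (div_ne_zero hy two_ne_zero), ← pow_mul, ← cpow_natCast]
    push_cast
    rfl
  rw [div_eq_mul_inv, inv_factorial_mul_Gamma_mul_Gamma hν, genPoch, hpow, div_pow _ (4 : ℂ),
    mul_pow (-b), add_left_comm, add_comm (2 * (k : ℂ))]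
  ring

variable {z : ℝ} (hz : 0 < z)
include hz

theorem sqrt_pi_div_two_mul_mul_half_cpow (ν : ℂ) :
    (√(π / (2 * z)) : ℂ) * ((z : ℂ) / 2) ^ (ν + 1 / 2) = √π / 2 * ((z : ℂ) / 2) ^ ν := by
  have hz₂ : (z : ℂ) / 2 ≠ 0 := div_ne_zero (ofReal_ne_zero.2 hz.ne') two_ne_zero
  have hhalf : ((z : ℂ) / 2) ^ (1 / 2 : ℂ) = (√(z / 2) : ℂ) := by
    rw [Real.sqrt_eq_rpow, ofReal_cpow (by positivity)]
    push_cast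
    rfl
  have hsqrt : √(π / (2 * z)) * √(z / 2) = √π / 2 := by
    rw [← Real.sqrt_mul (by positivity), show π / (2 * z) * (z / 2) = π / 2 ^ 2 by field_simp,
      Real.sqrt_div Real.pi_pos.le, Real.sqrt_sq two_pos.le]
  rw [cpow_add _ _ hz₂, hhalf, mul_left_comm, mul_comm, ← ofReal_mul, hsqrt]
  push_cast
  rfl

theorem cpow_neg_half_mul_sqrt_cpow (ν : ℂ) : (z : ℂ) ^ (-ν / 2) * (√z : ℂ) ^ ν = 1 := by
  have hsqrt : (√z : ℂ) ≠ 0 := ofReal_ne_zero.2 (by positivity)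
  have hz_eq : (z : ℂ) = √z * √z := by rw [← ofReal_mul, Real.mul_self_sqrt hz.le]
  rw [hz_eq, mul_cpow_ofReal_nonneg (by positivity) (by positivity), ← cpow_add _ _ hsqrt,
    ← cpow_add _ _ hsqrt]
  simp

end Bessel

theorem add_ne_neg_natCast_of_neg_re_lt {ν a : ℂ} (h : -a.re < ν.re) (n : ℕ) : ν + a ≠ -n := by
  intro heq
  have hre : ν.re + a.re = -n := by simpa using congrArg re heq
  linarith [n.cast_nonneg (α := ℝ)]

theorem stmt19_general (b ρ : ℂ) (hρ : 0 < ρ.re) (z : ℝ) (hz : 0 < z) :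
    (∀ c ν : ℂ, (∀ n : ℕ, ν + 3 / 2 ≠ -n) →
      sphG b c ν ρ z =
        (Real.sqrt π : ℂ) * ((z:ℂ) / 2) ^ ν /
            (2 * Complex.Gamma (ν + 3/2) ^ 2 * Complex.Gamma (c - 1/2)) *
          ∫ t in Ioi (0:ℝ), (t:ℂ) ^ (c + ν - 1) * Complex.exp (-(t:ℂ) - ρ / (t:ℂ)) *
            hyp0F3 ((2 * ν + 3) / 2) ((2 * ν + 3) / 4) ((2 * ν + 5) / 4)
              (-b * (z:ℂ) ^ 2 * (t:ℂ) ^ 2 / 16)) ∧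
    (∀ lam ν : ℂ, (∀ n : ℕ, ν + 1 ≠ -n) →
      cliffC b lam ν ρ z =
        1 / (Complex.Gamma (ν + 1) ^ 2 * Complex.Gamma lam) *
          ∫ t in Ioi (0:ℝ), (t:ℂ) ^ (lam + ν - 1) * Complex.exp (-(t:ℂ) - ρ / (t:ℂ)) *
            hyp0F3 (ν + 1) ((ν + 1) / 2) ((ν + 2) / 2)
              (-b * (z:ℂ) * (t:ℂ) ^ 2 / 4)) := by
  constructor
  · intro c ν hν
    have hz₀ : (z : ℂ) ≠ 0 := ofReal_ne_zero.2 hz.ne'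
    have hshift : ν + 1 / 2 + 1 = ν + 3 / 2 := by ring
    rw [sphG, unifiedG_eq_integral hρ (by rwa [hshift]) b (c - 1 / 2) hz₀, ← mul_assoc,
      ← mul_div_assoc, sqrt_pi_div_two_mul_mul_half_cpow hz, hshift]
    refine congrArg₂ (· * ·) (by ring) (setIntegral_congr_fun measurableSet_Ioi fun t _ ↦ ?_)
    simp only [extGammaIntegrand]
    ring_nf
  · intro lam ν hν
    have hsqrt : ((2 * √z : ℝ) : ℂ) / 2 = √z := by
      push_cast
      ring
    have hsq : (√z : ℂ) ^ 2 = z := by rw [← ofReal_pow, Real.sq_sqrt hz.le]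
    have hy : ((2 * √z : ℝ) : ℂ) ≠ 0 := ofReal_ne_zero.2 (by positivity)
    rw [cliffC, unifiedG_eq_integral hρ hν b lam hy, hsqrt, ← mul_assoc, ← mul_div_assoc,
      cpow_neg_half_mul_sqrt_cpow hz, hsq]
    simp only [extGammaIntegrand, div_mul_eq_mul_div]

theorem stmt19 (b ρ : ℂ) (hρ : 0 < ρ.re) (z : ℝ) (hz : 0 < z) :
    (∀ c ν : ℂ, 1/2 < c.re → -(3/2 : ℝ) < ν.re →
      sphG b c ν ρ z =
        (Real.sqrt π : ℂ) * ((z:ℂ) / 2) ^ ν /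
            (2 * Complex.Gamma (ν + 3/2) ^ 2 * Complex.Gamma (c - 1/2)) *
          ∫ t in Ioi (0:ℝ), (t:ℂ) ^ (c + ν - 1) * Complex.exp (-(t:ℂ) - ρ / (t:ℂ)) *
            hyp0F3 ((2 * ν + 3) / 2) ((2 * ν + 3) / 4) ((2 * ν + 5) / 4)
              (-b * (z:ℂ) ^ 2 * (t:ℂ) ^ 2 / 16)) ∧
    (∀ lam ν : ℂ, 0 < lam.re → -1 < ν.re →
      cliffC b lam ν ρ z =
        1 / (Complex.Gamma (ν + 1) ^ 2 * Complex.Gamma lam) *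
          ∫ t in Ioi (0:ℝ), (t:ℂ) ^ (lam + ν - 1) * Complex.exp (-(t:ℂ) - ρ / (t:ℂ)) *
            hyp0F3 (ν + 1) ((ν + 1) / 2) ((ν + 2) / 2)
              (-b * (z:ℂ) * (t:ℂ) ^ 2 / 4)) :=
  (stmt19_general b ρ hρ z hz).imp
    (fun h c ν _ hν ↦ h c ν (add_ne_neg_natCast_of_neg_re_lt (by simpa using hν)))
    (fun h lam ν _ hν ↦ h lam ν (add_ne_neg_natCast_of_neg_re_lt (by simpa using hν)))
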